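/- (Key inequality in the proof of Theorem 5) For any policy π and any reference policy μ with μ(a|s) > 0 for all s, a, the fixed point of the regularized evaluation operator is dominated by the fixed point of the unregularized pessimistic Bellman operator: Q̄^π_{N,k;μ}(s,a) ≤ Q^π_{N,k}(s,a) for all (s,a). -/

import Mathlib

/-- `kmin x k` is the entry in position `k` (0-indexed) of a monotone nondecreasing
sorted arrangement of the tuple `x`, i.e. the `(k+1)`-th smallest entry counted with
multiplicity. -/
noncomputable def kmin {N : ℕ} (x : Fin N → ℝ) (k : Fin N) : ℝ := x (Tuple.sort x k)

/-- A probability mass function on a finite type: nonnegative and summing to one. -/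
def IsPMF {α : Type*} [Fintype α] (p : α → ℝ) : Prop :=
  (∀ a, 0 ≤ p a) ∧ ∑ a, p a = 1

/-- Sup norm `‖Q‖_∞ = max_{(s,a)} |Q(s,a)|` on `S × A → ℝ` (curried). -/
noncomputable def supNorm {S A : Type*} [Fintype S] [Fintype A] [Nonempty S] [Nonempty A]
    (Q : S → A → ℝ) : ℝ :=
  Finset.univ.sup' Finset.univ_nonempty (fun p : S × A => |Q p.1 p.2|)

/-- The `(N,k)`-pessimistic Bellman operator (with `k` given 0-indexed as `k : Fin N`):
`(B^π_{N,k} Q)(s,a) = r(s,a) + γ · Σ_{v : Fin N → ι} (Π_j P(v_j)) ·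
  kmin_k( j ↦ Σ_{s'} M(v_j)(s,a)(s') · Σ_{a'} π(a'|s') · Q(s',a') )`. -/
noncomputable def pessBellman {S A ι : Type*} [Fintype S] [Fintype A] [Fintype ι]
    (r : S → A → ℝ) (γ : ℝ) (P : ι → ℝ) (M : ι → S → A → S → ℝ)
    (π : S → A → ℝ) (N : ℕ) (k : Fin N) (Q : S → A → ℝ) : S → A → ℝ :=
  fun s a => r s a + γ * ∑ v : Fin N → ι, (∏ j, P (v j)) *
    kmin (fun j => ∑ s', M (v j) s a s' * ∑ a', π s' a' * Q s' a') k

/-- Kullback–Leibler divergence `KL(p‖q) = Σ_a p(a)·log(p(a)/q(a))` on a finite type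
(with the convention `0·log 0 = 0`, automatic here). -/
noncomputable def KLdiv {α : Type*} [Fintype α] (p q : α → ℝ) : ℝ :=
  ∑ a, p a * Real.log (p a / q a)

/-- The soft `(N,k)`-pessimistic Bellman operator with reference policy `μ` and
coefficient `α` (with `k` given 0-indexed as `k : Fin N`):
`(B̄*_{N,k;μ} Q)(s,a) = r(s,a) + γ · Σ_{v} (Π_j P(v_j)) ·
  kmin_k( j ↦ Σ_{s'} M(v_j)(s,a)(s') · α·log Σ_{a'} μ(a'|s')·exp(Q(s',a')/α) )`. -/
noncomputable def softBellman {S A ι : Type*} [Fintype S] [Fintype A] [Fintype ι]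
    (r : S → A → ℝ) (γ : ℝ) (P : ι → ℝ) (M : ι → S → A → S → ℝ)
    (μ : S → A → ℝ) (α : ℝ) (N : ℕ) (k : Fin N) (Q : S → A → ℝ) : S → A → ℝ :=
  fun s a => r s a + γ * ∑ v : Fin N → ι, (∏ j, P (v j)) *
    kmin (fun j => ∑ s', M (v j) s a s' *
      (α * Real.log (∑ a', μ s' a' * Real.exp (Q s' a' / α)))) k

/-- The regularized `(N,k)`-pessimistic evaluation operator for policy `π`, reference
policy `μ` and coefficient `α` (with `k` given 0-indexed as `k : Fin N`):
`(B̄^π_{N,k;μ} Q)(s,a) = r(s,a) + γ · Σ_{v} (Π_j P(v_j)) ·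
  kmin_k( j ↦ Σ_{s'} M(v_j)(s,a)(s') · (Σ_{a'} π(a'|s')·Q(s',a') − α·KL(π(·|s')‖μ(·|s'))) )`. -/
noncomputable def regBellman {S A ι : Type*} [Fintype S] [Fintype A] [Fintype ι]
    (r : S → A → ℝ) (γ : ℝ) (P : ι → ℝ) (M : ι → S → A → S → ℝ)
    (π μ : S → A → ℝ) (α : ℝ) (N : ℕ) (k : Fin N) (Q : S → A → ℝ) : S → A → ℝ :=
  fun s a => r s a + γ * ∑ v : Fin N → ι, (∏ j, P (v j)) *
    kmin (fun j => ∑ s', M (v j) s a s' *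
      ((∑ a', π s' a' * Q s' a') - α * KLdiv (π s') (μ s'))) k

theorem kmin_le_add {N : ℕ} (x y : Fin N → ℝ) (c : ℝ) (h : ∀ j, x j ≤ y j + c) (k : Fin N) :
    kmin x k ≤ kmin y k + c := by
  have hne : ∃ j, j ∈ (Finset.Ici k).map (Tuple.sort x).toEmbedding ∧
      j ∈ (Finset.Iic k).map (Tuple.sort y).toEmbedding := by
    by_contra hcon
    have hd : Disjoint ((Finset.Ici k).map (Tuple.sort x).toEmbedding)
        ((Finset.Iic k).map (Tuple.sort y).toEmbedding) := by
      rw [Finset.disjoint_left]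
      intro j h1 h2
      exact hcon ⟨j, h1, h2⟩
    have h1 := Finset.card_union_of_disjoint hd
    have h2 := Finset.card_le_univ ((Finset.Ici k).map (Tuple.sort x).toEmbedding ∪
        (Finset.Iic k).map (Tuple.sort y).toEmbedding)
    simp only [Finset.card_map, Fin.card_Ici, Fin.card_Iic, Fintype.card_fin] at h1 h2
    have := k.isLt
    omega
  obtain ⟨j, hj1, hj2⟩ := hne
  rw [Finset.mem_map] at hj1 hj2
  obtain ⟨i, hi, rfl⟩ := hj1
  obtain ⟨i', hi', he⟩ := hj2
  have e1 : kmin x k ≤ x (Tuple.sort x i) := Tuple.monotone_sort x (Finset.mem_Ici.1 hi)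
  have e2 : y (Tuple.sort y i') ≤ kmin y k := Tuple.monotone_sort y (Finset.mem_Iic.1 hi')
  have e3 := h (Tuple.sort x i)
  have he' : Tuple.sort y i' = Tuple.sort x i := he
  rw [he'] at e2
  linarith

theorem KLdiv_nonneg_of_pos {α : Type*} [Fintype α] (p q : α → ℝ) (hp : IsPMF p) (hq : IsPMF q)
    (hpos : ∀ a, 0 < q a) : 0 ≤ KLdiv p q := by
  have h : ∑ a, (p a - q a) ≤ KLdiv p q := by
    unfold KLdiv
    refine Finset.sum_le_sum fun a _ => ?_
    rcases (hp.1 a).eq_or_lt with h0 | h0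
    · rw [← h0]
      have := (hpos a).le
      simp [this]
    · have h1 := Real.one_sub_inv_le_log_of_pos (div_pos h0 (hpos a))
      have h2 := mul_le_mul_of_nonneg_left h1 h0.le
      have h3 : p a * (1 - (p a / q a)⁻¹) = p a - q a := by
        have := (hpos a).ne'
        field_simp
      linarith
  rw [Finset.sum_sub_distrib, hp.2, hq.2] at h
  linarith

theorem sum_le_add_of_isPMF {α : Type*} [Fintype α] (p f g : α → ℝ) (c : ℝ) (hp : IsPMF p)
    (h : ∀ a, f a ≤ g a + c) : ∑ a, p a * f a ≤ ∑ a, p a * g a + c := by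
  calc ∑ a, p a * f a ≤ ∑ a, p a * (g a + c) :=
        Finset.sum_le_sum fun a _ => mul_le_mul_of_nonneg_left (h a) (hp.1 a)
    _ = ∑ a, p a * g a + c := by
        simp only [mul_add, Finset.sum_add_distrib, ← Finset.sum_mul, hp.2, one_mul]

theorem isPMF_prod {ι : Type*} [Fintype ι] (P : ι → ℝ) (hP : IsPMF P) (N : ℕ) :
    IsPMF (fun v : Fin N → ι => ∏ j, P (v j)) := by
  refine ⟨fun v => Finset.prod_nonneg fun j _ => hP.1 _, ?_⟩
  classical
  have := Fintype.sum_pow P N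
  rw [hP.2, one_pow] at this
  exact this.symm

/-- Key inequality in the proof of Theorem 5: the fixed point of the regularized
evaluation operator is dominated by the fixed point of the unregularized pessimistic
Bellman operator: `Q̄^π_{N,k;μ}(s,a) ≤ Q^π_{N,k}(s,a)` for all `(s,a)`. -/
theorem regBellman_fixedPoint_le_pessBellman_fixedPoint
    {S A ι : Type*} [Fintype S] [Fintype A] [Fintype ι]
    (r : S → A → ℝ) (γ : ℝ) (hγ0 : 0 ≤ γ) (hγ1 : γ < 1)
    (π : S → A → ℝ) (hπ : ∀ s, IsPMF (π s))
    (μ : S → A → ℝ) (hμ : ∀ s, IsPMF (μ s)) (hμpos : ∀ s a, 0 < μ s a)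
    (α : ℝ) (hα : 0 < α)
    (P : ι → ℝ) (hP : IsPMF P)
    (M : ι → S → A → S → ℝ) (hM : ∀ v s a, IsPMF (M v s a))
    (N : ℕ) (hN : 1 ≤ N) (k : ℕ) (hk1 : 1 ≤ k) (hkN : k ≤ N)
    (Qreg Qun : S → A → ℝ)
    (hQreg : regBellman r γ P M π μ α N ⟨k - 1, by omega⟩ Qreg = Qreg)
    (hQun : pessBellman r γ P M π N ⟨k - 1, by omega⟩ Qun = Qun) :
    ∀ s a, Qreg s a ≤ Qun s a := by
  intro s a
  obtain ⟨⟨s0, a0⟩, -, hmax⟩ := Finset.exists_max_image (Finset.univ : Finset (S × A))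
    (fun p => Qreg p.1 p.2 - Qun p.1 p.2) ⟨(s, a), Finset.mem_univ _⟩
  obtain ⟨c, hc⟩ : ∃ c, c = Qreg s0 a0 - Qun s0 a0 := ⟨_, rfl⟩
  have hle : ∀ s a, Qreg s a ≤ Qun s a + c := by
    intro s a
    have := hmax (s, a) (Finset.mem_univ _)
    simp only at this
    linarith
  have hV : ∀ s', (∑ a', π s' a' * Qreg s' a') - α * KLdiv (π s') (μ s')
      ≤ (∑ a', π s' a' * Qun s' a') + c := by
    intro s'
    have h1 := sum_le_add_of_isPMF (π s') (Qreg s') (Qun s') c (hπ s') (hle s')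
    have h2 := mul_nonneg hα.le (KLdiv_nonneg_of_pos (π s') (μ s') (hπ s') (hμ s') (hμpos s'))
    linarith
  have hkey := sum_le_add_of_isPMF _ _ _ c (isPMF_prod P hP N) (fun v : Fin N → ι =>
    kmin_le_add _ _ c (fun j => sum_le_add_of_isPMF (M (v j) s0 a0) _ _ c (hM (v j) s0 a0) hV)
      ⟨k - 1, by omega⟩)
  have hkey2 := mul_le_mul_of_nonneg_left hkey hγ0
  have e1 := congrFun (congrFun hQreg s0) a0
  have e2 := congrFun (congrFun hQun s0) a0
  simp only [regBellman] at e1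
  simp only [pessBellman] at e2
  rw [mul_add] at hkey2
  have hc2 : c ≤ γ * c := by linarith
  have hc0 : c ≤ 0 := by nlinarith
  linarith [hle s a]
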